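/- The symmetrized closure of the relator set of the presentation of G(𝒜) (the closure of the set of cyclic reductions of the relators under inverses and cyclic permutations) satisfies the C'(1/20) small cancellation condition: for every relator r in the symmetrized set and every piece u with r = uv, the word length of u is less than (1/20) times the word length of r. -/

import Mathlib

/-!
Common setup: an `L`-structure `𝒜` for a language whose symbols are enumerated
(`m`-th symbol, `m ≥ 1`, each a function or relation symbol of arity ≥ 1), and the
presented group `G(𝒜)` of Harrison-Trainor and Ho.
-/

/-- A first-order language with symbols enumerated by `ℕ` (the `m`-th symbol, for `m ≥ 1`,
is a function symbol if `isFunc m`, and a relation symbol otherwise, of arity `arity m ≥ 1`),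
together with an interpretation on a domain `A`: `funcInterp m` interprets the `m`-th symbol
when it is a function symbol, and `relInterp m` when it is a relation symbol. -/
structure IndexedStructure where
  A : Type
  arity : ℕ → ℕ
  arity_pos : ∀ m, 1 ≤ m → 1 ≤ arity m
  isFunc : ℕ → Prop
  funcInterp : ∀ m, (Fin (arity m) → A) → A
  relInterp : ∀ m, (Fin (arity m) → A) → Prop

/-- The generating set of `G(𝒜)`: one generator for each element of the domain `A`,
plus five further generators `b`, `c`, `d`, `f₁`, `f₂`. -/
inductive GenSym (A : Type) : Type
  | elt : A → GenSym A
  | b : GenSym A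
  | c : GenSym A
  | d : GenSym A
  | f1 : GenSym A
  | f2 : GenSym A

/-- `chainProd lo x y = x y^{(lo+1)²} x y^{(lo+2)²} ⋯ x y^{(lo+1000)²}`.
So `u_A = chainProd 0`, `u_b = chainProd 1000`, `u_c = chainProd 2000`,
`u_d = chainProd 3000`, and `v = chainProd 4000`. -/
def chainProd {G : Type*} [Group G] (lo : ℕ) (x y : G) : G :=
  ((List.range 1000).map fun k => x * y ^ ((lo + k + 1) ^ 2)).prod

/-- `wProd m xs y = x₁⋯xₙ y^{100m+1} x₁⋯xₙ y^{100m+2} ⋯ x₁⋯xₙ y^{100m+100}`,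
i.e. the word `w_m(x₁,…,xₙ,y)`. -/
def wProd {G : Type*} [Group G] (m : ℕ) {n : ℕ} (xs : Fin n → G) (y : G) : G :=
  ((List.range 100).map fun k => (List.ofFn xs).prod * y ^ (100 * m + k + 1)).prod

/-- The set of relators of the presentation of `G(𝒜)`. -/
def grpRels (S : IndexedStructure) (p₁ p₂ : ℕ) : Set (FreeGroup (GenSym S.A)) :=
  {FreeGroup.of GenSym.f1 ^ p₁, FreeGroup.of GenSym.f2 ^ p₂,
    chainProd 4000 (FreeGroup.of GenSym.f1) (FreeGroup.of GenSym.f2),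
    chainProd 4000 (FreeGroup.of GenSym.f2) (FreeGroup.of GenSym.f1),
    chainProd 1000 (FreeGroup.of GenSym.b) (FreeGroup.of GenSym.f1),
    chainProd 1000 (FreeGroup.of GenSym.b) (FreeGroup.of GenSym.f2),
    chainProd 2000 (FreeGroup.of GenSym.c) (FreeGroup.of GenSym.f1),
    chainProd 2000 (FreeGroup.of GenSym.c) (FreeGroup.of GenSym.f2),
    chainProd 3000 (FreeGroup.of GenSym.d) (FreeGroup.of GenSym.f1),
    chainProd 3000 (FreeGroup.of GenSym.d) (FreeGroup.of GenSym.f2)}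
  ∪ {r | ∃ a : S.A,
      r = chainProd 0 (FreeGroup.of (GenSym.elt a)) (FreeGroup.of GenSym.c) ∨
      r = chainProd 0 (FreeGroup.of (GenSym.elt a)) (FreeGroup.of GenSym.d)}
  ∪ {r | ∃ m, 1 ≤ m ∧ S.isFunc m ∧ ∃ as : Fin (S.arity m) → S.A,
      r = wProd m (fun i => FreeGroup.of (GenSym.elt (as i))) (FreeGroup.of GenSym.b) *
        (FreeGroup.of (GenSym.elt (S.funcInterp m as)))⁻¹}
  ∪ {r | ∃ m, 1 ≤ m ∧ ¬ S.isFunc m ∧ ∃ as : Fin (S.arity m) → S.A,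
      S.relInterp m as ∧
      r = wProd m (fun i => FreeGroup.of (GenSym.elt (as i))) (FreeGroup.of GenSym.b)}

/-- The group `G(𝒜)`, presented on the generators `GenSym A` with relators `grpRels`. -/
abbrev GA (S : IndexedStructure) (p₁ p₂ : ℕ) : Type :=
  PresentedGroup (grpRels S p₁ p₂)

/-- The image in `G(𝒜)` of a generator. -/
def gen (S : IndexedStructure) (p₁ p₂ : ℕ) (g : GenSym S.A) : GA S p₁ p₂ :=
  PresentedGroup.of g

/-- A word (in the letters `α` and their formal inverses) is reduced if it has no adjacent
pair of mutually inverse letters. -/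
def IsReducedWord {α : Type} (w : List (α × Bool)) : Prop :=
  w.Chain' fun s t => ¬ (s.1 = t.1 ∧ s.2 = !t.2)

/-- A word is cyclically reduced if all of its cyclic permutations (rotations) are reduced. -/
def IsCyclicallyReduced {α : Type} (w : List (α × Bool)) : Prop :=
  ∀ k : ℕ, IsReducedWord (w.rotate k)

/-- The symmetrized closure of a set `R` of relators: the closure of the set of cyclic
reductions of the relators under inverses and cyclic permutations.  Equivalently (and this is
how we phrase it), it is the set of cyclically reduced words which, as elements of the free
group, are conjugate to some `r ∈ R` or to its inverse. -/
def symmClosure {α : Type} (R : Set (FreeGroup α)) : Set (List (α × Bool)) :=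
  {w | IsCyclicallyReduced w ∧
    ∃ r ∈ R, (∃ u : FreeGroup α, r = u * FreeGroup.mk w * u⁻¹) ∨
      (∃ u : FreeGroup α, r⁻¹ = u * FreeGroup.mk w * u⁻¹)}

/-- A word `u` is a piece (relative to a symmetrized set `RR`) if it is an initial segment of
two distinct elements of `RR`. -/
def IsPiece {α : Type} (RR : Set (List (α × Bool))) (u : List (α × Bool)) : Prop :=
  ∃ r₁ ∈ RR, ∃ r₂ ∈ RR, r₁ ≠ r₂ ∧ u <+: r₁ ∧ u <+: r₂

namespace SC

open FreeGroup hiding IsCyclicallyReduced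

theorem red_iff {α : Type} (w : List (α × Bool)) : IsReducedWord w ↔ FreeGroup.IsReduced w := by
  unfold IsReducedWord FreeGroup.IsReduced
  have : (fun s t : α × Bool => ¬ (s.1 = t.1 ∧ s.2 = !t.2)) =
      (fun a b : α × Bool => a.1 = b.1 → a.2 = b.2) := by
    funext s t
    simp
  rw [← this]
  exact Iff.rfl

theorem cr_of_double {α : Type} {w : List (α × Bool)} (h : FreeGroup.IsReduced (w ++ w)) :
    IsCyclicallyReduced w := by
  intro k
  rw [red_iff]
  rw [← List.rotate_mod]
  rcases Nat.eq_zero_or_pos w.length with h0 | h0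
  · rw [List.length_eq_zero_iff] at h0
    subst h0
    simp
  rw [List.rotate_eq_drop_append_take (Nat.mod_lt _ h0).le]
  refine h.infix ⟨w.take (k % w.length), w.drop (k % w.length), ?_⟩
  rw [← List.append_assoc, List.take_append_drop, List.append_assoc, List.take_append_drop]

theorem cr_rotate {α : Type} {w : List (α × Bool)} (h : IsCyclicallyReduced w) (n : ℕ) :
    IsCyclicallyReduced (w.rotate n) := by
  intro k
  rw [List.rotate_rotate]
  exact h _

theorem eq_of_mk_eq {α : Type} {v w : List (α × Bool)} (hv : FreeGroup.IsReduced v)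
    (hw : FreeGroup.IsReduced w) (h : FreeGroup.mk v = FreeGroup.mk w) : v = w := by
  classical
  have := reduce.sound h
  rwa [hv.reduce_eq, hw.reduce_eq] at this

theorem isReduced_invRev {α : Type} {v : List (α × Bool)} (hv : FreeGroup.IsReduced v) :
    FreeGroup.IsReduced (FreeGroup.invRev v) := by
  classical
  rw [isReduced_iff_reduce_eq, reduce_invRev, hv.reduce_eq]

theorem invRev_rotate {α : Type} (w : List (α × Bool)) (k : ℕ) :
    ∃ j, FreeGroup.invRev (w.rotate k) = (FreeGroup.invRev w).rotate j := by
  have h : w ~r w.rotate k := ⟨k, rfl⟩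
  have h2 : FreeGroup.invRev w ~r FreeGroup.invRev (w.rotate k) := by
    unfold FreeGroup.invRev
    exact (h.map _).reverse
  obtain ⟨j, hj⟩ := h2
  exact ⟨j, hj.symm⟩

theorem cr_invRev {α : Type} {w : List (α × Bool)} (h : IsCyclicallyReduced w) :
    IsCyclicallyReduced (FreeGroup.invRev w) := by
  intro k
  rw [red_iff]
  obtain ⟨j, hj⟩ := invRev_rotate (FreeGroup.invRev w) k
  rw [FreeGroup.invRev_invRev] at hj
  have h2 := (red_iff _).1 (h j)
  rw [← hj] at h2
  have h3 := isReduced_invRev h2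
  rwa [FreeGroup.invRev_invRev] at h3

theorem cr_red {α : Type} {w : List (α × Bool)} (h : IsCyclicallyReduced w) :
    FreeGroup.IsReduced w := by
  have := (red_iff _).1 (h 0)
  rwa [List.rotate_zero] at this

/-- Conjugate cyclically reduced words are rotations of each other. -/
theorem conj_aux {α : Type} (c' : List (α × Bool)) (hc' : IsCyclicallyReduced c') :
    ∀ (n : ℕ) (L c : List (α × Bool)), L.length = n → FreeGroup.IsReduced L →
      IsCyclicallyReduced c →
      FreeGroup.mk c' = FreeGroup.mk L * FreeGroup.mk c * (FreeGroup.mk L)⁻¹ → c' ~r c := by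
  intro n
  induction n with
  | zero =>
    intro L c hL _ hc h
    rw [List.length_eq_zero_iff] at hL
    subst hL
    have : FreeGroup.mk c' = FreeGroup.mk c := by
      rw [h, ← FreeGroup.one_eq_mk]; group
    rw [eq_of_mk_eq (cr_red hc') (cr_red hc) this]
  | succ n ih =>
    intro L c hL hLr hc h
    obtain ⟨L₀, x, rfl⟩ : ∃ L₀ x, L = L₀ ++ [x] := by
      rcases List.eq_nil_or_concat L with h0 | ⟨L₀, x, h0⟩
      · subst h0; simp at hL
      · exact ⟨L₀, x, by simpa using h0⟩
    have hL0 : L₀.length = n := by simpa using hL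
    have hL0r : FreeGroup.IsReduced L₀ := hLr.infix ⟨[], [x], by simp⟩
    rcases List.eq_nil_or_concat c with h0 | ⟨c₀, z, h0⟩
    · subst h0
      have : FreeGroup.mk c' = FreeGroup.mk [] := by
        rw [h, ← FreeGroup.one_eq_mk]; group
      rw [eq_of_mk_eq (cr_red hc') (cr_red hc) this]
    have h0 : c = c₀ ++ [z] := by simpa using h0
    by_cases hzx : z = x
    · subst hzx
      have hrot : c.rotate c₀.length = z :: c₀ := by
        rw [h0, List.rotate_append_length_eq]; rfl
      have hcr := cr_rotate hc c₀.length
      have := ih L₀ (c.rotate c₀.length) hL0 hL0r hcr (by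
        rw [h, hrot, h0]
        have e1 : FreeGroup.mk (z :: c₀) = FreeGroup.mk [z] * FreeGroup.mk c₀ := by
          rw [FreeGroup.mul_mk]; rfl
        rw [e1, ← FreeGroup.mul_mk, ← FreeGroup.mul_mk]
        group)
      exact this.trans (List.IsRotated.forall _ _)
    obtain ⟨z', c₁, h1⟩ : ∃ z' c₁, c = z' :: c₁ := by
      cases c with
      | nil => simp at h0
      | cons a b => exact ⟨a, b, rfl⟩
    by_cases hzx' : z' = (x.1, !x.2)
    · have hrot : c.rotate 1 = c₁ ++ [z'] := by rw [h1]; simp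
      have hcr := cr_rotate hc 1
      have := ih L₀ (c.rotate 1) hL0 hL0r hcr (by
        rw [h, hrot, h1]
        have e1 : FreeGroup.mk (z' :: c₁) = FreeGroup.mk [z'] * FreeGroup.mk c₁ := by
          rw [FreeGroup.mul_mk]; rfl
        have e2 : FreeGroup.mk [z'] = (FreeGroup.mk [x])⁻¹ := by
          rw [FreeGroup.inv_mk, hzx']; simp [FreeGroup.invRev]
        rw [e1, ← FreeGroup.mul_mk, ← FreeGroup.mul_mk, e2]
        group)
      exact this.trans (List.IsRotated.forall _ _)
    · exfalso
      -- the conjugate word is reduced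
      set L := L₀ ++ [x] with hLdef
      have hne : c ≠ [] := by rw [h0]; simp
      have hr1 : FreeGroup.IsReduced (L ++ c) := by
        unfold FreeGroup.IsReduced
        rw [List.isChain_append]
        refine ⟨hLr, cr_red hc, ?_⟩
        intro a ha b hb
        rw [hLdef] at ha
        rw [h1] at hb
        simp at ha hb
        subst ha; subst hb
        intro hab
        by_contra hcon
        apply hzx'
        ext
        · exact hab.symm
        · simp; rcases ha : x.2 <;> rcases hb : z'.2 <;> simp_all
      have hr2 : FreeGroup.IsReduced (c ++ FreeGroup.invRev L) := by
        unfold FreeGroup.IsReduced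
        rw [List.isChain_append]
        refine ⟨cr_red hc, isReduced_invRev hLr, ?_⟩
        intro a ha b hb
        rw [hLdef, FreeGroup.invRev_append] at hb
        rw [h0] at ha
        simp [FreeGroup.invRev] at ha hb
        subst ha; subst hb
        intro hab
        by_contra hcon
        apply hzx
        ext
        · exact hab
        · rcases ha : x.2 <;> rcases hb : z.2 <;> simp_all
      have hr3 : FreeGroup.IsReduced (L ++ c ++ FreeGroup.invRev L) := by
        exact FreeGroup.IsReduced.append_overlap hr1 hr2 hne
      have heq : c' = L ++ c ++ FreeGroup.invRev L := by
        apply eq_of_mk_eq (cr_red hc') hr3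
        rw [h, FreeGroup.inv_mk, FreeGroup.mul_mk, FreeGroup.mul_mk]
      obtain ⟨a, L₁, hL1⟩ : ∃ a L₁, L = a :: L₁ := by
        cases hLL : L with
        | nil => rw [hLL] at hL; simp at hL
        | cons a b => exact ⟨a, b, rfl⟩
      have hc2 := (red_iff _).1 (hc' 1)
      rw [heq, hL1] at hc2
      have : ((a :: L₁) ++ c ++ FreeGroup.invRev (a :: L₁)).rotate 1 =
          (L₁ ++ c ++ FreeGroup.invRev L₁) ++ [(a.1, !a.2), a] := by
        simp [FreeGroup.invRev]
      rw [this] at hc2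
      have hc3 : FreeGroup.IsReduced [(a.1, !a.2), a] := hc2.infix ⟨L₁ ++ c ++ FreeGroup.invRev L₁, [], by simp⟩
      simp [FreeGroup.IsReduced] at hc3

theorem conj_rot {α : Type} {c c' : List (α × Bool)} (hc : IsCyclicallyReduced c)
    (hc' : IsCyclicallyReduced c') (h : IsConj (FreeGroup.mk c) (FreeGroup.mk c')) : c ~r c' := by
  classical
  rw [isConj_iff] at h
  obtain ⟨g, hg⟩ := h
  have := conj_aux c' hc' g.toWord.length g.toWord c rfl isReduced_toWord hc (by
    rw [mk_toWord]; exact hg.symm)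
  exact this.symm

end SC

namespace SC

/-- Data describing a (cyclic) word made of blocks `R k` followed by the power `y ^ (e k)`. -/
structure BD (α : Type) where
  y : α
  K : ℕ
  R : ℕ → List (α × Bool)
  e : ℕ → ℕ

namespace BD
variable {α : Type}

def blk (D : BD α) (k : ℕ) : List (α × Bool) := D.R k ++ List.replicate (D.e k) (D.y, true)

def F (D : BD α) : ℕ → List (α × Bool)
  | 0 => []
  | n + 1 => F D n ++ D.blk n

def P (D : BD α) (n : ℕ) : ℕ := (D.F n).length

def s (D : BD α) (i : ℕ) : Option (α × Bool) := (D.F (i + 1))[i]?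

def word (D : BD α) : List (α × Bool) := D.F D.K

structure Good (D : BD α) : Prop where
  Kpos : 0 < D.K
  Rper : ∀ k, D.R (k + D.K) = D.R k
  eper : ∀ k, D.e (k + D.K) = D.e k
  Rne : ∀ k, D.R k ≠ []
  Ry : ∀ k, ∀ l ∈ D.R k, l.1 ≠ D.y
  Rred : ∀ k, FreeGroup.IsReduced (D.R k)
  epos : ∀ k, 1 ≤ D.e k
  e2 : ∀ k, 3 ≤ D.e k + D.e (k + 1)
  len : ∀ k, 20 * ((D.blk k).length + (D.blk (k + 1)).length + (D.blk (k + 2)).length + 1)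
    ≤ D.word.length

variable {D : BD α}

theorem F_succ (n : ℕ) : D.F (n + 1) = D.F n ++ D.blk n := rfl

theorem P_zero : D.P 0 = 0 := rfl

theorem P_succ (n : ℕ) : D.P (n + 1) = D.P n + (D.blk n).length := by
  simp [P, F_succ]

theorem blk_len (k : ℕ) : (D.blk k).length = (D.R k).length + D.e k := by
  simp [blk]

theorem Rlen (h : D.Good) (k : ℕ) : 1 ≤ (D.R k).length :=
  List.length_pos_iff.2 (h.Rne k)

theorem le_P (h : D.Good) (n : ℕ) : n ≤ D.P n := by
  induction n with
  | zero => simp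
  | succ n ih =>
    rw [P_succ, blk_len]
    have := Rlen h n
    omega

theorem F_add (n m : ℕ) : ∃ t, D.F (n + m) = D.F n ++ t := by
  induction m with
  | zero => exact ⟨[], by simp⟩
  | succ m ih =>
    obtain ⟨t, ht⟩ := ih
    exact ⟨t ++ D.blk (n + m), by rw [← Nat.add_assoc, F_succ, ht, List.append_assoc]⟩

theorem F_get_le {n m i : ℕ} (hnm : n ≤ m) (hi : i < D.P n) : (D.F m)[i]? = (D.F n)[i]? := by
  obtain ⟨k, rfl⟩ := Nat.exists_eq_add_of_le hnm
  obtain ⟨t, ht⟩ := F_add (D := D) n k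
  rw [ht, List.getElem?_append_left hi]

theorem F_get (h : D.Good) {n i : ℕ} (hi : i < D.P n) : (D.F n)[i]? = D.s i := by
  unfold s
  have h1 : i < D.P (i + 1) := lt_of_lt_of_le (Nat.lt_succ_self i) (le_P h (i + 1))
  rcases le_total n (i + 1) with h2 | h2
  · rw [F_get_le h2 hi]
  · rw [F_get_le h2 h1]

theorem s_blk (h : D.Good) (k j : ℕ) (hj : j < (D.blk k).length) :
    D.s (D.P k + j) = (D.blk k)[j]? := by
  rw [← F_get h (n := k + 1) (by rw [P_succ]; omega), F_succ, List.getElem?_append_right]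
  · unfold P; congr 1; omega
  · unfold P; omega

theorem s_R (h : D.Good) (k j : ℕ) (hj : j < (D.R k).length) :
    D.s (D.P k + j) = (D.R k)[j]? := by
  rw [s_blk h k j (by rw [blk_len]; omega), blk, List.getElem?_append_left hj]

theorem s_y (h : D.Good) (k j : ℕ) (hj : (D.R k).length ≤ j) (hj' : j < (D.R k).length + D.e k) :
    D.s (D.P k + j) = some (D.y, true) := by
  rw [s_blk h k j (by rw [blk_len]; omega), blk, List.getElem?_append_right hj,
    List.getElem?_replicate_of_lt (by omega)]

theorem R_ne (h : D.Good) (k j : ℕ) : (D.R k)[j]? ≠ some (D.y, true) := by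
  intro hh
  have := List.mem_of_getElem? hh
  exact h.Ry k _ this rfl

theorem s_R_ne (h : D.Good) (k j : ℕ) (hj : j < (D.R k).length) :
    D.s (D.P k + j) ≠ some (D.y, true) := by
  rw [s_R h k j hj]; exact R_ne h k j

theorem exists_blk (h : D.Good) (i : ℕ) : ∃ k, D.P k ≤ i ∧ i < D.P (k + 1) := by
  have h1 : ∃ n, i < D.P n := ⟨i + 1, lt_of_lt_of_le (Nat.lt_succ_self i) (le_P h (i + 1))⟩
  classical
  have h2 := Nat.find_spec h1
  rcases hn : Nat.find h1 with _ | k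
  · rw [hn] at h2; simp [P_zero] at h2
  · refine ⟨k, ?_, by rw [hn] at h2; exact h2⟩
    have := Nat.find_min h1 (m := k) (by omega)
    omega

theorem F_per (h : D.Good) (n : ℕ) : D.F (D.K + n) = D.word ++ D.F n := by
  induction n with
  | zero => simp [F, word]
  | succ n ih =>
    rw [← Nat.add_assoc, F_succ, ih, F_succ, List.append_assoc]
    congr 2
    unfold blk
    rw [Nat.add_comm D.K n, h.Rper, h.eper]

theorem P_per (h : D.Good) (n : ℕ) : D.P (D.K + n) = D.word.length + D.P n := by
  simp [P, F_per h]

theorem s_per (h : D.Good) (i : ℕ) : D.s (D.word.length + i) = D.s i := by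
  have h1 : i < D.P (i + 1) := lt_of_lt_of_le (Nat.lt_succ_self i) (le_P h (i + 1))
  rw [← F_get h (n := D.K + (i + 1)) (by rw [P_per h]; omega), F_per h,
    List.getElem?_append_right (by omega), Nat.add_sub_cancel_left, F_get h h1]

theorem s_mul (h : D.Good) (q i : ℕ) : D.s (D.word.length * q + i) = D.s i := by
  induction q with
  | zero => simp
  | succ q ih => rw [Nat.mul_succ, Nat.add_comm _ D.word.length, Nat.add_assoc, s_per h, ih]

theorem P_mul (h : D.Good) (q n : ℕ) : D.P (D.K * q + n) = D.word.length * q + D.P n := by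
  induction q with
  | zero => simp
  | succ q ih =>
    rw [Nat.mul_succ, Nat.add_comm _ D.K, Nat.add_assoc, P_per h, ih]; ring

theorem word_pos (h : D.Good) : 0 < D.word.length := by
  have h1 := le_P h D.K
  have h2 := h.Kpos
  unfold P at h1
  unfold word
  omega

theorem rotate_get (h : D.Good) (c j : ℕ) (hj : j < D.word.length) :
    (D.word.rotate c)[j]? = D.s (c + j) := by
  rw [List.getElem?_rotate hj]
  have h1 : (j + c) % D.word.length < D.P D.K := Nat.mod_lt _ (word_pos h)
  have h2 := F_get h h1
  rw [← s_mul h ((j + c) / D.word.length) ((j + c) % D.word.length),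
    Nat.div_add_mod, Nat.add_comm j c] at h2
  rw [Nat.add_comm j c]
  exact h2

theorem rotate_P (h : D.Good) (k : ℕ) : D.word.rotate (D.P k) = D.word.rotate (D.P (k % D.K)) := by
  conv_lhs => rw [← Nat.div_add_mod k D.K, P_mul h]
  rw [← List.rotate_mod, Nat.mul_add_mod, List.rotate_mod]

theorem final (h : D.Good) {c c' i k k' : ℕ} (h1 : c + i = D.P k) (h2 : c' + i = D.P k')
    (hk : k % D.K = k' % D.K) : D.word.rotate c = D.word.rotate c' := by
  apply List.rotate_injective i
  simp only [List.rotate_rotate]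
  rw [h1, h2, rotate_P h, rotate_P h k', hk]

theorem F_red (h : D.Good) (n : ℕ) : FreeGroup.IsReduced (D.F n) ∧
    ∀ a ∈ (D.F n).getLast?, a = (D.y, true) := by
  induction n with
  | zero => simp [F]
  | succ n ih =>
    have hrep : List.replicate (D.e n) (D.y, true) ≠ [] := by
      have := h.epos n
      intro hh
      rw [List.replicate_eq_nil_iff] at hh
      omega
    have hblk : FreeGroup.IsReduced (D.blk n) := by
      unfold blk FreeGroup.IsReduced
      rw [List.isChain_append]
      refine ⟨h.Rred n, List.isChain_replicate_of_rel _ (fun _ => rfl), ?_⟩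
      intro a ha b hb hab
      exfalso
      have hb' := List.mem_of_mem_head? hb
      have ha' := List.mem_of_mem_getLast? ha
      have := List.eq_of_mem_replicate hb'
      subst this
      exact h.Ry n a ha' hab
    constructor
    · unfold FreeGroup.IsReduced
      rw [F_succ, List.isChain_append]
      refine ⟨ih.1, hblk, ?_⟩
      intro a ha b hb hab
      exfalso
      have := ih.2 a ha
      subst this
      unfold blk at hb
      rw [List.head?_append_of_ne_nil _ (h.Rne n)] at hb
      exact h.Ry n b (List.mem_of_mem_head? hb) hab.symm
    · intro a ha
      rw [F_succ, blk, ← List.append_assoc, List.getLast?_append_of_ne_nil _ hrep] at ha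
      exact List.eq_of_mem_replicate (List.mem_of_mem_getLast? ha)

theorem word_cr (h : D.Good) : _root_.IsCyclicallyReduced D.word := by
  apply cr_of_double
  have := (F_red h (D.K + D.K)).1
  rwa [F_per h] at this

/-- Decoding one block. -/
theorem decode_blk {D' : BD α} (h : D.Good) (h' : D'.Good) (hy : D.y = D'.y) (k k' : ℕ)
    (hh : ∀ j ≤ (D.blk k).length, D.s (D.P k + j) = D'.s (D'.P k' + j)) :
    D.R k = D'.R k' ∧ D.e k = D'.e k' := by
  rw [blk_len] at hh
  have e1 := h.epos k
  have e1' := h'.epos k'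
  have hl : (D.R k).length = (D'.R k').length := by
    rcases lt_trichotomy (D.R k).length (D'.R k').length with hlt | heq | hgt
    · exfalso
      have := hh (D.R k).length (by omega)
      rw [s_y h k _ le_rfl (by omega), hy] at this
      exact s_R_ne h' k' _ hlt this.symm
    · exact heq
    · exfalso
      have := hh (D'.R k').length (by omega)
      rw [s_y h' k' _ le_rfl (by omega), ← hy] at this
      exact s_R_ne h k _ hgt this
  refine ⟨?_, ?_⟩
  · apply List.ext_getElem?
    intro j
    rcases lt_or_ge j (D.R k).length with hj | hj
    · have := hh j (by omega)
      rwa [s_R h k j hj, s_R h' k' j (by omega)] at this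
    · rw [List.getElem?_eq_none hj, List.getElem?_eq_none (by omega)]
  · rcases lt_trichotomy (D.e k) (D'.e k') with hlt | heq | hgt
    · exfalso
      have := hh ((D.R k).length + D.e k) le_rfl
      rw [s_y h' k' _ (by omega) (by omega), ← hy] at this
      have h3 := s_R_ne h (k + 1) 0 (Rlen h (k + 1))
      rw [P_succ, blk_len] at h3
      exact h3 this
    · exact heq
    · exfalso
      have := hh ((D'.R k').length + D'.e k') (by omega)
      rw [s_y h k _ (by omega) (by omega), hy] at this
      have h3 := s_R_ne h' (k' + 1) 0 (Rlen h' (k' + 1))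
      rw [P_succ, blk_len] at h3
      exact h3 this.symm

theorem decode {D' : BD α} (h : D.Good) (h' : D'.Good) (hy : D.y = D'.y) {c c' N : ℕ}
    (hN : D.word.length ≤ 20 * N)
    (hh : ∀ j < N, D.s (c + j) = D'.s (c' + j)) :
    ∃ k k' i, c + i = D.P k ∧ c' + i = D'.P k' ∧ D.R k = D'.R k' ∧ D.e k = D'.e k' ∧
      D.R (k + 1) = D'.R (k' + 1) ∧ D.e (k + 1) = D'.e (k' + 1) := by
  obtain ⟨k, hk1, hk2⟩ := exists_blk h c
  have hl := h.len k
  have p1 := P_succ (D := D) k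
  have p2 := P_succ (D := D) (k + 1)
  have p3 := P_succ (D := D) (k + 2)
  obtain ⟨i, hi⟩ : ∃ i, c + i + 1 = D.P (k + 1) := ⟨D.P (k + 1) - 1 - c, by omega⟩
  have hy1 : D.s (c + i) = some (D.y, true) := by
    have := s_y h k ((D.R k).length + D.e k - 1) (by have := h.epos k; omega)
      (by have := h.epos k; omega)
    rw [← this]
    congr 1
    rw [blk_len] at p1
    have := h.epos k
    omega
  have hn1 : D.s (c + (i + 1)) ≠ some (D.y, true) := by
    have := s_R_ne h (k + 1) 0 (Rlen h (k + 1))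
    rwa [← hi] at this
  rw [hh i (by omega), hy] at hy1
  rw [hh (i + 1) (by omega), hy] at hn1
  obtain ⟨k', hk1', hk2'⟩ := exists_blk h' (c' + i)
  have p1' := P_succ (D := D') k'
  have hp' : c' + i + 1 = D'.P (k' + 1) := by
    by_contra hcon
    obtain ⟨j, hj⟩ := Nat.exists_eq_add_of_le hk1'
    rw [blk_len] at p1'
    rcases lt_or_ge j (D'.R k').length with hjl | hjl
    · rw [hj] at hy1
      exact s_R_ne h' k' j hjl hy1
    · apply hn1
      rw [← s_y h' k' (j + 1) (by omega) (by omega)]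
      congr 1
      omega
  have d1 := decode_blk h h' hy (k + 1) (k' + 1) (by
    intro j hj
    rw [← hi, ← hp', Nat.add_assoc, Nat.add_assoc, Nat.add_assoc, Nat.add_assoc]
    apply hh
    omega)
  have p2' := P_succ (D := D') (k' + 1)
  have hbe : (D.blk (k + 1)).length = (D'.blk (k' + 1)).length := by
    rw [blk_len, blk_len, d1.1, d1.2]
  have p2 : D.P (k + 2) = _ := p2
  have p2' : D'.P (k' + 2) = _ := p2'
  have d2 := decode_blk h h' hy (k + 2) (k' + 2) (by
    intro j hj
    have := hh (i + 1 + (D.blk (k + 1)).length + j) (by omega)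
    convert this using 2 <;> omega)
  exact ⟨k + 1, k' + 1, i + 1, by omega, by omega, d1.1, d1.2, d2.1, d2.2⟩

/-- a long window contains `y y`. -/
theorem exists_yy (h : D.Good) {c N : ℕ} (hN : D.word.length ≤ 20 * N) :
    ∃ i, i + 1 < N ∧ D.s (c + i) = some (D.y, true) ∧ D.s (c + (i + 1)) = some (D.y, true) := by
  obtain ⟨k, hk1, hk2⟩ := exists_blk h c
  have hl := h.len k
  have p1 := P_succ (D := D) k
  have p2 := P_succ (D := D) (k + 1)
  have p3 := P_succ (D := D) (k + 2)
  have l1 := blk_len (D := D) (k + 1)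
  have l2 := blk_len (D := D) (k + 2)
  have e2 := h.e2 (k + 1)
  rcases Nat.lt_or_ge 1 (D.e (k + 1)) with h1 | h1
  · refine ⟨D.P (k + 1) + (D.R (k + 1)).length - c, by omega, ?_, ?_⟩
    · rw [← s_y h (k + 1) (D.R (k + 1)).length (by omega) (by omega)]
      congr 1; omega
    · rw [← s_y h (k + 1) ((D.R (k + 1)).length + 1) (by omega) (by omega)]
      congr 1; omega
  · have e2 : 3 ≤ D.e (k + 1) + D.e (k + 2) := e2
    have p3 : D.P (k + 3) = _ := p3
    have p2 : D.P (k + 2) = _ := p2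
    refine ⟨D.P (k + 2) + (D.R (k + 2)).length - c, by omega, ?_, ?_⟩
    · rw [← s_y h (k + 2) (D.R (k + 2)).length (by omega) (by omega)]
      congr 1; omega
    · rw [← s_y h (k + 2) ((D.R (k + 2)).length + 1) (by omega) (by omega)]
      congr 1; omega

/-- a long window contains a letter different from `y`. -/
theorem exists_ny (h : D.Good) {c N : ℕ} (hN : D.word.length ≤ 20 * N) :
    ∃ i, i < N ∧ D.s (c + i) ≠ some (D.y, true) := by
  obtain ⟨k, hk1, hk2⟩ := exists_blk h c
  have hl := h.len k
  have p1 := P_succ (D := D) k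
  refine ⟨D.P (k + 1) - c, by omega, ?_⟩
  have := s_R_ne h (k + 1) 0 (Rlen h (k + 1))
  convert this using 2
  omega

/-- If all `R k` are singletons, no letter other than `y` is repeated. -/
theorem no_double (h : D.Good) (hR : ∀ k, (D.R k).length = 1) (i : ℕ) {z : α × Bool}
    (hz : z.1 ≠ D.y) (h1 : D.s i = some z) (h2 : D.s (i + 1) = some z) : False := by
  obtain ⟨k, hk1, hk2⟩ := exists_blk h i
  have p1 := P_succ (D := D) k
  obtain ⟨j, rfl⟩ := Nat.exists_eq_add_of_le hk1
  rw [blk_len, hR] at p1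
  have := h.epos k
  rcases Nat.eq_zero_or_pos j with rfl | hj
  · rw [Nat.add_assoc, s_y h k _ (by rw [hR]) (by rw [hR]; omega)] at h2
    simp at h2
    exact hz (by rw [← h2])
  · rw [s_y h k _ (by rw [hR]; omega) (by rw [hR]; omega)] at h1
    simp at h1
    exact hz (by rw [← h1])

theorem mk_F (n : ℕ) : FreeGroup.mk (D.F n) =
    ((List.range n).map fun k => FreeGroup.mk (D.R k) * FreeGroup.of D.y ^ D.e k).prod := by
  induction n with
  | zero => simp [F, FreeGroup.one_eq_mk]
  | succ n ih =>
    rw [F_succ, ← FreeGroup.mul_mk, ih, List.range_succ, List.map_append, List.prod_append]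
    simp [blk, ← FreeGroup.mul_mk, FreeGroup.of, FreeGroup.pow_mk]

theorem P_sum (n : ℕ) : D.P n = ∑ k ∈ Finset.range n, ((D.R k).length + D.e k) := by
  induction n with
  | zero => simp [P_zero]
  | succ n ih => rw [P_succ, ih, Finset.sum_range_succ, blk_len]

theorem mem_word {z : α × Bool} (hz : z ∈ D.word) :
    z = (D.y, true) ∨ ∃ k, z ∈ D.R k := by
  unfold word at hz
  generalize D.K = n at hz
  induction n with
  | zero => simp [F] at hz
  | succ n ih =>
    rw [F_succ, List.mem_append] at hz
    rcases hz with hz | hz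
    · exact ih hz
    · unfold blk at hz
      rw [List.mem_append] at hz
      rcases hz with hz | hz
      · exact Or.inr ⟨n, hz⟩
      · exact Or.inl (List.eq_of_mem_replicate hz)

end BD

end SC

namespace SC

/-- Block data of `chainProd lo x y`. -/
def chainBD {α : Type} (lo : ℕ) (x y : α) : BD α where
  y := y
  K := 1000
  R := fun _ => [(x, true)]
  e := fun k => (lo + k % 1000 + 1) ^ 2

theorem sum_sq (lo n : ℕ) : 6 * ∑ k ∈ Finset.range n, (1 + (lo + k + 1) ^ 2) =
    6 * n + 6 * n * lo ^ 2 + 6 * lo * (n * (n + 1)) + n * (n + 1) * (2 * n + 1) := by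
  induction n with
  | zero => simp
  | succ n ih => rw [Finset.sum_range_succ, Nat.mul_add, ih]; ring

theorem chain_len {α : Type} (lo : ℕ) (x y : α) :
    (chainBD lo x y).word.length = 1000 + 1000 * lo ^ 2 + 1001000 * lo + 333833500 := by
  have h : (chainBD lo x y).word.length = (chainBD lo x y).P 1000 := rfl
  rw [h, BD.P_sum]
  have h2 : ∑ k ∈ Finset.range 1000, (((chainBD lo x y).R k).length + (chainBD lo x y).e k) =
      ∑ k ∈ Finset.range 1000, (1 + (lo + k + 1) ^ 2) := by
    apply Finset.sum_congr rfl
    intro k hk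
    rw [Finset.mem_range] at hk
    simp [chainBD, Nat.mod_eq_of_lt hk]
  rw [h2]
  have := sum_sq lo 1000
  omega

theorem chain_e_le {α : Type} (lo : ℕ) (x y : α) (k : ℕ) :
    (chainBD lo x y).e k ≤ (lo + 1000) ^ 2 := by
  have := Nat.mod_lt k (show 1000 > 0 by norm_num)
  exact Nat.pow_le_pow_left (by omega) 2

theorem chain_blk_le {α : Type} (lo : ℕ) (x y : α) (k : ℕ) :
    ((chainBD lo x y).blk k).length ≤ 1 + (lo + 1000) ^ 2 := by
  rw [BD.blk_len]
  have := chain_e_le lo x y k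
  have h : ((chainBD lo x y).R k).length = 1 := rfl
  omega

theorem chain_good {α : Type} (lo : ℕ) (x y : α) (hxy : x ≠ y) : (chainBD lo x y).Good where
  Kpos := by simp [chainBD]
  Rper := fun k => rfl
  eper := fun k => by simp [chainBD]
  Rne := fun k => by simp [chainBD]
  Ry := fun k => by simpa [chainBD] using hxy
  Rred := fun k => by simp [chainBD]
  epos := fun k => by
    show 1 ≤ (lo + k % 1000 + 1) ^ 2
    exact Nat.one_le_pow _ _ (by omega)
  e2 := fun k => by
    show 3 ≤ (lo + k % 1000 + 1) ^ 2 + (lo + (k + 1) % 1000 + 1) ^ 2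
    have h1 : 1 ≤ (lo + k % 1000 + 1) ^ 2 := Nat.one_le_pow _ _ (by omega)
    have h2 : 1 ≤ (lo + (k + 1) % 1000 + 1) ^ 2 := Nat.one_le_pow _ _ (by omega)
    rcases Nat.lt_or_ge (k % 1000) 1 with h | h
    · have : 2 ^ 2 ≤ (lo + (k + 1) % 1000 + 1) ^ 2 := Nat.pow_le_pow_left (by omega) 2
      omega
    · have : 2 ^ 2 ≤ (lo + k % 1000 + 1) ^ 2 := Nat.pow_le_pow_left (by omega) 2
      omega
  len := fun k => by
    have h1 := chain_blk_le lo x y k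
    have h2 := chain_blk_le lo x y (k + 1)
    have h3 := chain_blk_le lo x y (k + 2)
    have h4 : (lo + 1000) ^ 2 = lo ^ 2 + 2000 * lo + 1000000 := by ring
    rw [chain_len]
    omega

theorem chain_mk {α : Type} (lo : ℕ) (x y : α) :
    FreeGroup.mk (chainBD lo x y).word = chainProd lo (FreeGroup.of x) (FreeGroup.of y) := by
  unfold BD.word chainProd
  rw [BD.mk_F]
  refine congrArg List.prod ?_
  have hK : (chainBD lo x y).K = 1000 := rfl
  rw [hK]
  apply List.map_congr_left
  intro k hk
  rw [List.mem_range] at hk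
  simp [chainBD, Nat.mod_eq_of_lt hk, FreeGroup.of]

/-- The parameters of the chain relators. -/
def CT {A : Type} (lo : ℕ) (x y : GenSym A) : Prop :=
  (lo = 4000 ∧ x = .f1 ∧ y = .f2) ∨ (lo = 4000 ∧ x = .f2 ∧ y = .f1) ∨
  (lo = 1000 ∧ x = .b ∧ y = .f1) ∨ (lo = 1000 ∧ x = .b ∧ y = .f2) ∨
  (lo = 2000 ∧ x = .c ∧ y = .f1) ∨ (lo = 2000 ∧ x = .c ∧ y = .f2) ∨
  (lo = 3000 ∧ x = .d ∧ y = .f1) ∨ (lo = 3000 ∧ x = .d ∧ y = .f2) ∨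
  (∃ a, lo = 0 ∧ x = .elt a ∧ y = .c) ∨ (∃ a, lo = 0 ∧ x = .elt a ∧ y = .d)

theorem CT_ne {A : Type} {lo : ℕ} {x y : GenSym A} (h : CT lo x y) : x ≠ y := by
  rcases h with h | h | h | h | h | h | h | h | ⟨a, h⟩ | ⟨a, h⟩ <;>
    (obtain ⟨-, rfl, rfl⟩ := h; simp)

theorem CT_lo {A : Type} {lo : ℕ} {x y : GenSym A} (h : CT lo x y) : lo ≤ 4000 := by
  rcases h with h | h | h | h | h | h | h | h | ⟨a, h⟩ | ⟨a, h⟩ <;> omega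

theorem CT_lo_eq {A : Type} {lo lo' : ℕ} {x y : GenSym A} (h : CT lo x y) (h' : CT lo' x y) :
    lo = lo' := by
  rcases h with h | h | h | h | h | h | h | h | ⟨a, h⟩ | ⟨a, h⟩ <;>
    (obtain ⟨rfl, rfl, rfl⟩ := h; simp [CT] at h'; omega)

theorem CT_y {A : Type} {lo : ℕ} {x y : GenSym A} (h : CT lo x y) :
    y = .c ∨ y = .d ∨ y = .f1 ∨ y = .f2 := by
  rcases h with h | h | h | h | h | h | h | h | ⟨a, h⟩ | ⟨a, h⟩ <;> simp [h]

/-- The word `a₁ ⋯ aₙ`. -/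
def W (S : IndexedStructure) (m : ℕ) (as : Fin (S.arity m) → S.A) : List (GenSym S.A × Bool) :=
  List.ofFn fun i => (GenSym.elt (as i), true)

open Classical in
/-- The special run of `A`-letters. -/
noncomputable def R0 (S : IndexedStructure) (m : ℕ) (as : Fin (S.arity m) → S.A) :
    List (GenSym S.A × Bool) :=
  if S.isFunc m then
    if (W S m as).head? = some (.elt (S.funcInterp m as), true) then (W S m as).tail
    else (.elt (S.funcInterp m as), false) :: W S m as
  else W S m as

def Merged (S : IndexedStructure) (m : ℕ) (as : Fin (S.arity m) → S.A) : Prop :=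
  S.isFunc m ∧ S.arity m = 1 ∧ (W S m as).head? = some (.elt (S.funcInterp m as), true)

open Classical in
/-- Block data of the relators coming from symbols of the language. -/
noncomputable def wBD (S : IndexedStructure) (m : ℕ) (as : Fin (S.arity m) → S.A) :
    BD (GenSym S.A) :=
  if Merged S m as then
    { y := .b, K := 99, R := fun _ => W S m as,
      e := fun k => if k % 99 = 98 then 200 * m + 101 else 100 * m + k % 99 + 2 }
  else
    { y := .b, K := 100, R := fun k => if k % 100 = 0 then R0 S m as else W S m as,
      e := fun k => 100 * m + k % 100 + 1 }

section
variable {S : IndexedStructure} {m : ℕ} {as : Fin (S.arity m) → S.A}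

theorem W_len : (W S m as).length = S.arity m := by simp [W]

theorem W_mem {l : GenSym S.A × Bool} (h : l ∈ W S m as) : ∃ a, l = (.elt a, true) := by
  unfold W at h
  rw [List.mem_ofFn] at h
  obtain ⟨i, hi⟩ := h
  exact ⟨_, hi.symm⟩

theorem R0_mem {l : GenSym S.A × Bool} (h : l ∈ R0 S m as) : ∃ a, l.1 = .elt a := by
  unfold R0 at h
  split_ifs at h
  · obtain ⟨a, rfl⟩ := W_mem (List.mem_of_mem_tail h); exact ⟨a, rfl⟩
  · rcases List.mem_cons.1 h with rfl | h
    · exact ⟨_, rfl⟩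
    · obtain ⟨a, rfl⟩ := W_mem h; exact ⟨a, rfl⟩
  · obtain ⟨a, rfl⟩ := W_mem h; exact ⟨a, rfl⟩

theorem red_of_true {α : Type} {l : List (α × Bool)} (h : ∀ a ∈ l, a.2 = true) :
    FreeGroup.IsReduced l := by
  induction l with
  | nil => simp
  | cons a l ih =>
    rw [FreeGroup.IsReduced, List.isChain_cons]
    refine ⟨fun b hb _ => ?_, ih fun b hb => h b (List.mem_cons_of_mem _ hb)⟩
    rw [h a (by simp), h b (List.mem_cons_of_mem _ (List.mem_of_mem_head? hb))]

theorem W_red : FreeGroup.IsReduced (W S m as) := by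
  apply red_of_true
  intro a ha
  obtain ⟨a, rfl⟩ := W_mem ha
  rfl

theorem R0_red : FreeGroup.IsReduced (R0 S m as) := by
  unfold R0
  split_ifs with h1 h2
  · exact W_red.infix (List.tail_suffix _).isInfix
  · rw [FreeGroup.IsReduced, List.isChain_cons]
    refine ⟨fun b hb hab => ?_, W_red⟩
    exfalso
    apply h2
    obtain ⟨a, rfl⟩ := W_mem (List.mem_of_mem_head? hb)
    rw [Option.mem_def] at hb
    simp at hab
    rw [hb, hab]
  · exact W_red

theorem R0_len_le : (R0 S m as).length ≤ S.arity m + 1 := by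
  unfold R0
  split_ifs <;> simp [W_len]; omega

theorem R0_len_ge : S.arity m - 1 ≤ (R0 S m as).length := by
  unfold R0
  split_ifs <;> simp [W_len]; omega

theorem R0_ne (hm : 1 ≤ m) (h : ¬ Merged S m as) : R0 S m as ≠ [] := by
  have h1 := S.arity_pos m hm
  intro h0
  have hl := congrArg List.length h0
  unfold R0 at hl
  split_ifs at hl with h2 h3
  · simp [W_len] at hl
    exact h ⟨h2, by omega, h3⟩
  · have := W_len (as := as)
    rw [List.length_nil] at hl
    omega

theorem sum_w (m n : ℕ) : 2 * ∑ k ∈ Finset.range n, (100 * m + k + 1) =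
    200 * m * n + n * (n + 1) := by
  induction n with
  | zero => simp
  | succ n ih => rw [Finset.sum_range_succ, Nat.mul_add, ih]; ring

theorem wBD_y : (wBD S m as).y = .b := by
  unfold wBD
  split_ifs <;> rfl

theorem wBD_R (k : ℕ) : (wBD S m as).R k = W S m as ∨
    (¬ Merged S m as ∧ k % 100 = 0 ∧ (wBD S m as).R k = R0 S m as) := by
  unfold wBD
  split_ifs with h
  · left; rfl
  · by_cases hk : k % 100 = 0
    · right; simp [hk, h]
    · left; simp [hk]

theorem wBD_mem {k : ℕ} {l : GenSym S.A × Bool} (h : l ∈ (wBD S m as).R k) :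
    ∃ a, l.1 = .elt a := by
  rcases wBD_R (as := as) k with h1 | ⟨-, -, h1⟩
  · rw [h1] at h; obtain ⟨a, rfl⟩ := W_mem h; exact ⟨a, rfl⟩
  · rw [h1] at h; exact R0_mem h

theorem merged_len (h : Merged S m as) : (wBD S m as).word.length = 10000 * m + 5149 := by
  have h1 : (wBD S m as).word.length = (wBD S m as).P 99 := by
    unfold BD.word BD.P; simp [wBD, h]
  rw [h1, BD.P_sum, Finset.sum_range_succ]
  have h2 : ∑ k ∈ Finset.range 98, (((wBD S m as).R k).length + (wBD S m as).e k) =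
      ∑ k ∈ Finset.range 98, (2 + (100 * m + k + 1)) := by
    apply Finset.sum_congr rfl
    intro k hk
    rw [Finset.mem_range] at hk
    have e1 : k % 99 = k := Nat.mod_eq_of_lt (by omega)
    have e2 : k ≠ 98 := by omega
    simp [wBD, h, W_len, h.2.1, e1, e2]
    omega
  rw [h2, Finset.sum_add_distrib]
  have := sum_w m 98
  simp [wBD, h, W_len, h.2.1]
  omega

theorem nonmerged_len (h : ¬ Merged S m as) : (wBD S m as).word.length =
    (R0 S m as).length + 99 * S.arity m + 10000 * m + 5050 := by
  have h1 : (wBD S m as).word.length = (wBD S m as).P 100 := by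
    unfold BD.word BD.P; simp [wBD, h]
  rw [h1, BD.P_sum, Finset.sum_add_distrib, Finset.sum_range_succ']
  have h2 : ∑ k ∈ Finset.range 99, (((wBD S m as).R (k + 1)).length) =
      ∑ k ∈ Finset.range 99, S.arity m := by
    apply Finset.sum_congr rfl
    intro k hk
    rw [Finset.mem_range] at hk
    have e1 : (k + 1) % 100 = k + 1 := Nat.mod_eq_of_lt (by omega)
    simp [wBD, h, W_len, e1]
  have h3 : ∑ k ∈ Finset.range 100, (wBD S m as).e k =
      ∑ k ∈ Finset.range 100, (100 * m + k + 1) := by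
    apply Finset.sum_congr rfl
    intro k hk
    rw [Finset.mem_range] at hk
    have e1 : k % 100 = k := Nat.mod_eq_of_lt (by omega)
    simp [wBD, h, e1]
  rw [h2, h3]
  have := sum_w m 100
  simp [wBD, h]
  omega

theorem merged_e (h : Merged S m as) (k : ℕ) : (wBD S m as).e k =
    if k % 99 = 98 then 200 * m + 101 else 100 * m + k % 99 + 2 := by
  simp [wBD, h]

theorem nonmerged_e (h : ¬ Merged S m as) (k : ℕ) : (wBD S m as).e k = 100 * m + k % 100 + 1 := by
  simp [wBD, h]

theorem merged_K (h : Merged S m as) : (wBD S m as).K = 99 := by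
  simp [wBD, h]

theorem nonmerged_K (h : ¬ Merged S m as) : (wBD S m as).K = 100 := by
  simp [wBD, h]

theorem wBD_e_ge (k : ℕ) : 100 * m + 1 ≤ (wBD S m as).e k := by
  by_cases h : Merged S m as
  · rw [merged_e h]; split_ifs <;> omega
  · rw [nonmerged_e h]; omega

theorem wBD_good (hm : 1 ≤ m) : (wBD S m as).Good where
  Kpos := by
    by_cases h : Merged S m as
    · rw [merged_K h]; norm_num
    · rw [nonmerged_K h]; norm_num
  Rper := fun k => by
    by_cases h : Merged S m as <;> simp [wBD, h]
  eper := fun k => by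
    by_cases h : Merged S m as <;> simp [wBD, h]
  Rne := fun k => by
    rcases wBD_R (as := as) k with h1 | ⟨h2, -, h1⟩
    · rw [h1]
      have := S.arity_pos m hm
      intro h0
      have := congrArg List.length h0
      simp [W_len] at this
      omega
    · rw [h1]; exact R0_ne hm h2
  Ry := fun k l hl => by
    obtain ⟨a, ha⟩ := wBD_mem hl
    rw [ha, wBD_y]
    simp
  Rred := fun k => by
    rcases wBD_R (as := as) k with h1 | ⟨h2, -, h1⟩
    · rw [h1]; exact W_red
    · rw [h1]; exact R0_red
  epos := fun k => by
    have := wBD_e_ge (as := as) k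
    omega
  e2 := fun k => by
    have := wBD_e_ge (as := as) k
    have := wBD_e_ge (as := as) (k + 1)
    omega
  len := fun k => by
    simp only [BD.blk_len]
    by_cases h : Merged S m as
    · have hR : ∀ j, ((wBD S m as).R j).length = 1 := by
        intro j
        simp [wBD, h, W_len, h.2.1]
      rw [merged_len h, hR, hR, hR, merged_e h, merged_e h, merged_e h]
      split_ifs <;> omega
    · have hR : ∀ j, ((wBD S m as).R j).length ≤ S.arity m + 1 := by
        intro j
        rcases wBD_R (as := as) j with h1 | ⟨h2, -, h1⟩
        · rw [h1, W_len]; omega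
        · rw [h1]; exact R0_len_le
      have h1 := hR k
      have h2 := hR (k + 1)
      have h3 := hR (k + 2)
      have h4 := R0_len_ge (as := as)
      rw [nonmerged_len h, nonmerged_e h, nonmerged_e h, nonmerged_e h]
      omega

end

theorem W_inj {S : IndexedStructure} {m : ℕ} {as as' : Fin (S.arity m) → S.A}
    (h : W S m as = W S m as') : as = as' := by
  unfold W at h
  have := List.ofFn_injective h
  funext i
  have := congrFun this i
  simpa using this

/-- The data of a `w`-relator is determined by two consecutive blocks. -/
theorem w_unique {S : IndexedStructure} {m m' : ℕ} {as : Fin (S.arity m) → S.A}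
    {as' : Fin (S.arity m') → S.A} (hm : 1 ≤ m) (hm' : 1 ≤ m') {k k' : ℕ}
    (hR : (wBD S m as).R k = (wBD S m' as').R k')
    (he : (wBD S m as).e k = (wBD S m' as').e k')
    (hR1 : (wBD S m as).R (k + 1) = (wBD S m' as').R (k' + 1))
    (he1 : (wBD S m as).e (k + 1) = (wBD S m' as').e (k' + 1)) :
    wBD S m as = wBD S m' as' ∧ k % (wBD S m as).K = k' % (wBD S m as).K := by
  have hmm : m = m' := by
    by_cases h : Merged S m as <;> by_cases h' : Merged S m' as'
    · rw [merged_e h, merged_e h'] at he he1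
      split_ifs at he he1 <;> omega
    · rw [merged_e h, nonmerged_e h'] at he he1
      split_ifs at he he1 <;> omega
    · rw [nonmerged_e h, merged_e h'] at he he1
      split_ifs at he he1 <;> omega
    · rw [nonmerged_e h, nonmerged_e h'] at he he1
      omega
  subst hmm
  have hW : W S m as = W S m as' := by
    rcases wBD_R (as := as) k with h1 | ⟨h1, h2, -⟩ <;>
    rcases wBD_R (as := as') k' with h1' | ⟨h1', h2', -⟩
    · rw [h1, h1'] at hR; exact hR
    · rcases wBD_R (as := as) (k + 1) with h3 | ⟨h3, h4, -⟩
      · rcases wBD_R (as := as') (k' + 1) with h3' | ⟨h3', h4', -⟩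
        · rw [h3, h3'] at hR1; exact hR1
        · omega
      · rw [nonmerged_e h3, nonmerged_e h1'] at he
        omega
    · rcases wBD_R (as := as') (k' + 1) with h3 | ⟨h3, h4, -⟩
      · rcases wBD_R (as := as) (k + 1) with h3' | ⟨h3', h4', -⟩
        · rw [h3, h3'] at hR1; exact hR1
        · omega
      · rw [nonmerged_e h3, nonmerged_e h1] at he
        omega
    · rcases wBD_R (as := as) (k + 1) with h3 | ⟨h3, h4, -⟩
      · rcases wBD_R (as := as') (k' + 1) with h3' | ⟨h3', h4', -⟩
        · rw [h3, h3'] at hR1; exact hR1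
        · omega
      · omega
  have := W_inj hW
  subst this
  refine ⟨rfl, ?_⟩
  by_cases h : Merged S m as
  · rw [merged_K h]
    rw [merged_e h, merged_e h] at he
    split_ifs at he <;> omega
  · rw [nonmerged_K h]
    rw [nonmerged_e h, nonmerged_e h] at he
    omega

theorem mk_W (S : IndexedStructure) (m : ℕ) (as : Fin (S.arity m) → S.A) :
    FreeGroup.mk (W S m as) =
      (List.ofFn fun i => FreeGroup.of (GenSym.elt (as i))).prod := by
  have : ∀ l : List (GenSym S.A), FreeGroup.mk (l.map fun a => (a, true)) =
      (l.map FreeGroup.of).prod := by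
    intro l
    induction l with
    | nil => simp [FreeGroup.one_eq_mk]
    | cons a l ih =>
      rw [List.map_cons, List.map_cons, List.prod_cons, ← ih, FreeGroup.of, FreeGroup.mul_mk]
      rfl
  have h := this (List.ofFn fun i => GenSym.elt (as i))
  rw [List.map_ofFn, List.map_ofFn] at h
  exact h

section
variable {S : IndexedStructure} {m : ℕ} {as : Fin (S.arity m) → S.A}

/-- The tail of the product common to all cases. -/
theorem wProd_split {G : Type*} [Group G] (m : ℕ) {n : ℕ} (xs : Fin n → G) (y : G) :
    wProd m xs y = (List.ofFn xs).prod * y ^ (100 * m + 1) *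
      ((List.range 99).map fun k => (List.ofFn xs).prod * y ^ (100 * m + (k + 1) + 1)).prod := by
  unfold wProd
  rw [List.range_succ_eq_map, List.map_cons, List.prod_cons, List.map_map]
  rfl

theorem nonmerged_mk (h : ¬ Merged S m as) : FreeGroup.mk (wBD S m as).word =
    FreeGroup.mk (R0 S m as) * FreeGroup.of GenSym.b ^ (100 * m + 1) *
      ((List.range 99).map fun k => FreeGroup.mk (W S m as) *
        FreeGroup.of GenSym.b ^ (100 * m + (k + 1) + 1)).prod := by
  unfold BD.word
  rw [BD.mk_F, nonmerged_K h, List.range_succ_eq_map, List.map_cons, List.prod_cons, List.map_map]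
  refine congrArg₂ _ ?_ ?_
  · simp [wBD, h]
  · refine congrArg List.prod ?_
    apply List.map_congr_left
    intro k hk
    rw [List.mem_range] at hk
    have e1 : (k + 1) % 100 = k + 1 := Nat.mod_eq_of_lt (by omega)
    simp [wBD, h, e1]

theorem merged_mk (h : Merged S m as) : FreeGroup.mk (wBD S m as).word =
      ((List.range 98).map fun k => FreeGroup.mk (W S m as) *
        FreeGroup.of GenSym.b ^ (100 * m + (k + 1) + 1)).prod *
      (FreeGroup.mk (W S m as) * FreeGroup.of GenSym.b ^ (200 * m + 101)) := by
  unfold BD.word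
  rw [BD.mk_F, merged_K h, List.range_succ, List.map_append, List.prod_append]
  refine congrArg₂ _ ?_ ?_
  · refine congrArg List.prod ?_
    apply List.map_congr_left
    intro k hk
    rw [List.mem_range] at hk
    have e1 : k % 99 = k := Nat.mod_eq_of_lt (by omega)
    have e2 : k ≠ 98 := by omega
    simp [wBD, h, e1, e2]
    rfl
  · simp [wBD, h]

theorem rel_conj (h : ¬ S.isFunc m) :
    wProd m (fun i => FreeGroup.of (GenSym.elt (as i))) (FreeGroup.of GenSym.b) =
      FreeGroup.mk (wBD S m as).word := by
  have h1 : ¬ Merged S m as := fun hh => h hh.1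
  rw [nonmerged_mk h1, wProd_split, ← mk_W]
  simp [R0, h]

theorem mk_W_head (h : (W S m as).head? = some (.elt (S.funcInterp m as), true)) :
    FreeGroup.mk (W S m as) = FreeGroup.of (GenSym.elt (S.funcInterp m as)) *
      FreeGroup.mk (W S m as).tail := by
  have : W S m as = (.elt (S.funcInterp m as), true) :: (W S m as).tail := by
    rw [List.head?_eq_some_iff] at h
    obtain ⟨t, ht⟩ := h
    rw [ht]; rfl
  conv_lhs => rw [this]
  rw [FreeGroup.of, FreeGroup.mul_mk]
  rfl

theorem func_conj (h : S.isFunc m) :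
    IsConj (wProd m (fun i => FreeGroup.of (GenSym.elt (as i))) (FreeGroup.of GenSym.b) *
        (FreeGroup.of (GenSym.elt (S.funcInterp m as)))⁻¹)
      (FreeGroup.mk (wBD S m as).word) := by
  rw [isConj_iff, wProd_split, ← mk_W]
  by_cases hM : Merged S m as
  · rw [merged_mk hM, List.range_succ, List.map_append, List.prod_append]
    have hWa : FreeGroup.mk (W S m as) = FreeGroup.of (GenSym.elt (S.funcInterp m as)) := by
      rw [mk_W_head hM.2.2]
      have : (W S m as).tail = [] := by
        apply List.eq_nil_of_length_eq_zero
        simp [W_len, hM.2.1]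
      rw [this, ← FreeGroup.one_eq_mk, mul_one]
    rw [← hWa]
    generalize FreeGroup.mk (W S m as) = w
    generalize FreeGroup.of GenSym.b = b
    refine ⟨(b ^ (100 * m + 1))⁻¹ * w⁻¹, ?_⟩
    have e1 : 200 * m + 101 = (100 * m + 98 + 1 + 1) + (100 * m + 1) := by omega
    rw [e1, pow_add b _ (100 * m + 1)]
    simp only [List.map_cons, List.map_nil, List.prod_cons, List.prod_nil, mul_one]
    have e2 : 100 * m + (98 + 1) + 1 = 100 * m + 98 + 1 + 1 := by omega
    rw [e2]
    generalize b ^ (100 * m + 1) = β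
    generalize b ^ (100 * m + 98 + 1 + 1) = γ
    generalize (List.map (fun k => w * b ^ (100 * m + (k + 1) + 1)) (List.range 98)).prod = δ
    group
  · rw [nonmerged_mk hM]
    generalize (List.map (fun k => FreeGroup.mk (W S m as) *
        FreeGroup.of GenSym.b ^ (100 * m + (k + 1) + 1)) (List.range 99)).prod = δ
    by_cases hh : (W S m as).head? = some (.elt (S.funcInterp m as), true)
    · refine ⟨(FreeGroup.of (GenSym.elt (S.funcInterp m as)))⁻¹, ?_⟩
      rw [mk_W_head hh]
      simp only [R0, h, hh, if_true]
      group
    · refine ⟨(FreeGroup.of (GenSym.elt (S.funcInterp m as)))⁻¹, ?_⟩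
      have : R0 S m as = [(.elt (S.funcInterp m as), false)] ++ W S m as := by
        simp [R0, h, hh]
      rw [this, ← FreeGroup.mul_mk]
      have e : FreeGroup.mk [(GenSym.elt (S.funcInterp m as), false)] =
          (FreeGroup.of (GenSym.elt (S.funcInterp m as)))⁻¹ := by
        rw [FreeGroup.of, FreeGroup.inv_mk]; rfl
      rw [e]
      group

end

end SC

namespace SC

/-- Rotations of the (positive) canonical relators. -/
def Pos (S : IndexedStructure) (p₁ p₂ : ℕ) (r : List (GenSym S.A × Bool)) : Prop :=
  r = List.replicate p₁ (.f1, true) ∨ r = List.replicate p₂ (.f2, true) ∨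
  (∃ lo x y c, CT lo x y ∧ r = (chainBD lo x y).word.rotate c) ∨
  (∃ m as c, 1 ≤ m ∧ r = (wBD S m as).word.rotate c)

theorem rep_cr {α : Type} (n : ℕ) (x : α) :
    IsCyclicallyReduced (List.replicate n (x, true)) := by
  apply cr_of_double
  apply red_of_true
  intro a ha
  rw [List.mem_append] at ha
  rcases ha with ha | ha <;> rw [List.eq_of_mem_replicate ha]

theorem canon {S : IndexedStructure} {p₁ p₂ : ℕ} {r : FreeGroup (GenSym S.A)}
    (hr : r ∈ grpRels S p₁ p₂) :
    ∃ c, IsCyclicallyReduced c ∧ IsConj r (FreeGroup.mk c) ∧ ∀ n, Pos S p₁ p₂ (c.rotate n) := by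
  have hpow : ∀ (x : GenSym S.A) (p : ℕ), FreeGroup.of x ^ p =
      FreeGroup.mk (List.replicate p (x, true)) := by
    intro x p
    simp [FreeGroup.of, FreeGroup.pow_mk]
  have hchain : ∀ (lo : ℕ) (x y : GenSym S.A), CT lo x y →
      r = chainProd lo (FreeGroup.of x) (FreeGroup.of y) →
      ∃ c, IsCyclicallyReduced c ∧ IsConj r (FreeGroup.mk c) ∧
        ∀ n, Pos S p₁ p₂ (c.rotate n) := by
    intro lo x y hct hreq
    refine ⟨(chainBD lo x y).word, BD.word_cr (chain_good lo x y (CT_ne hct)), ?_, ?_⟩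
    · rw [hreq, chain_mk]
    · intro n
      exact Or.inr (Or.inr (Or.inl ⟨lo, x, y, n, hct, rfl⟩))
  rcases hr with ((hr | hr) | hr) | hr
  · simp only [Set.mem_insert_iff, Set.mem_singleton_iff] at hr
    rcases hr with hr | hr | hr | hr | hr | hr | hr | hr | hr | hr
    · refine ⟨List.replicate p₁ (.f1, true), rep_cr _ _, ?_, ?_⟩
      · rw [hr, hpow]
      · intro n; left; rw [List.rotate_replicate]
    · refine ⟨List.replicate p₂ (.f2, true), rep_cr _ _, ?_, ?_⟩
      · rw [hr, hpow]
      · intro n; right; left; rw [List.rotate_replicate]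
    all_goals exact hchain _ _ _ (by simp [CT]) hr
  · obtain ⟨a, hr | hr⟩ := hr
    all_goals exact hchain _ _ _ (by simp [CT]) hr
  · obtain ⟨m, hm, hf, as, hr⟩ := hr
    refine ⟨(wBD S m as).word, BD.word_cr (wBD_good hm), ?_, ?_⟩
    · rw [hr]; exact func_conj hf
    · intro n
      exact Or.inr (Or.inr (Or.inr ⟨m, as, n, hm, rfl⟩))
  · obtain ⟨m, hm, hf, as, -, hr⟩ := hr
    refine ⟨(wBD S m as).word, BD.word_cr (wBD_good hm), ?_, ?_⟩
    · rw [hr, rel_conj hf]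
    · intro n
      exact Or.inr (Or.inr (Or.inr ⟨m, as, n, hm, rfl⟩))

theorem pos_of_symm {S : IndexedStructure} {p₁ p₂ : ℕ} {w : List (GenSym S.A × Bool)}
    (hw : w ∈ symmClosure (grpRels S p₁ p₂)) :
    Pos S p₁ p₂ w ∨ Pos S p₁ p₂ (FreeGroup.invRev w) := by
  obtain ⟨hcr, r, hr, h⟩ := hw
  obtain ⟨c, hc, hconj, hpos⟩ := canon hr
  rcases h with ⟨g, hg⟩ | ⟨g, hg⟩
  · left
    have h1 : IsConj (FreeGroup.mk w) r := isConj_iff.2 ⟨g, hg.symm⟩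
    obtain ⟨n, hn⟩ := conj_rot hc hcr (h1.trans hconj).symm
    rw [← hn]
    exact hpos n
  · right
    have h1 : IsConj (FreeGroup.mk (FreeGroup.invRev w)) r := by
      rw [isConj_iff]
      refine ⟨g, ?_⟩
      rw [← inv_inv r, hg, ← FreeGroup.inv_mk]
      group
    obtain ⟨n, hn⟩ := conj_rot hc (cr_invRev hcr) (h1.trans hconj).symm
    rw [← hn]
    exact hpos n

theorem prefix_get {α : Type} {u r : List α} (h : u <+: r) {j : ℕ} (hj : j < u.length) :
    r[j]? = u[j]? := by
  obtain ⟨t, rfl⟩ := h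
  rw [List.getElem?_append_left hj]

section
variable {α : Type} {D D' : BD α} {u : List (α × Bool)} {c c' : ℕ}

theorem blk_get (h : D.Good) (hu : u <+: D.word.rotate c) {j : ℕ} (hj : j < u.length) :
    D.s (c + j) = u[j]? := by
  have hl := hu.length_le
  rw [List.length_rotate] at hl
  rw [← BD.rotate_get h c j (by omega), prefix_get hu hj]

theorem blk_yy (h : D.Good) (hu : u <+: D.word.rotate c) (hN : D.word.length ≤ 20 * u.length) :
    ∃ i, i + 1 < u.length ∧ u[i]? = some (D.y, true) ∧ u[i + 1]? = some (D.y, true) := by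
  obtain ⟨i, h1, h2, h3⟩ := BD.exists_yy h (c := c) hN
  rw [blk_get h hu (by omega)] at h2 h3
  exact ⟨i, h1, h2, h3⟩

theorem chain_y_eq (h : D.Good) (h' : D'.Good) (hR : ∀ k, (D'.R k).length = 1)
    (hu : u <+: D.word.rotate c) (hu' : u <+: D'.word.rotate c')
    (hN : D.word.length ≤ 20 * u.length) : D.y = D'.y := by
  by_contra hne
  obtain ⟨i, h1, h2, h3⟩ := blk_yy h hu hN
  rw [← blk_get h' hu' (by omega)] at h2 h3
  exact BD.no_double h' hR (c' + i) (z := (D.y, true)) hne h2 h3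

theorem blk_decode (h : D.Good) (h' : D'.Good) (hy : D.y = D'.y)
    (hu : u <+: D.word.rotate c) (hu' : u <+: D'.word.rotate c')
    (hN : D.word.length ≤ 20 * u.length) :
    ∃ k k' i, c + i = D.P k ∧ c' + i = D'.P k' ∧ D.R k = D'.R k' ∧ D.e k = D'.e k' ∧
      D.R (k + 1) = D'.R (k' + 1) ∧ D.e (k + 1) = D'.e (k' + 1) :=
  BD.decode h h' hy hN fun j hj => by rw [blk_get h hu hj, blk_get h' hu' hj]

/-- A long prefix of a block word is not constant. -/
theorem blk_not_const (h : D.Good) (hu : u <+: D.word.rotate c)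
    (hN : D.word.length ≤ 20 * u.length) {p : ℕ} {x : α × Bool}
    (hu' : u <+: List.replicate p x) : False := by
  have hmem : ∀ j : ℕ, ∀ z, u[j]? = some z → z = x := by
    intro j z hz
    have := hu'.subset (List.mem_of_getElem? hz)
    exact List.eq_of_mem_replicate this
  obtain ⟨i, h1, h2, h3⟩ := blk_yy h hu hN
  have hx := hmem _ _ h2
  obtain ⟨j, h4, h5⟩ := BD.exists_ny h (c := c) hN
  rw [blk_get h hu h4] at h5
  apply h5
  rw [List.getElem?_eq_getElem h4, hx, hmem j _ (List.getElem?_eq_getElem h4)]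

end

theorem mem_wBD {S : IndexedStructure} {m : ℕ} {as : Fin (S.arity m) → S.A} {c : ℕ}
    {z : GenSym S.A × Bool} (hz : z ∈ (wBD S m as).word.rotate c) :
    z = (.b, true) ∨ ∃ a, z.1 = .elt a := by
  rw [List.mem_rotate] at hz
  rcases BD.mem_word hz with h | ⟨k, h⟩
  · left; rw [h, wBD_y]
  · right; exact wBD_mem h

theorem pow_main {S : IndexedStructure} {p₁ p₂ : ℕ} {p : ℕ}
    (hp : 10 ^ 10 < p) {f : GenSym S.A} (hf : (f = .f1 ∧ p = p₁) ∨ (f = .f2 ∧ p = p₂))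
    {r : List (GenSym S.A × Bool)} (hr : Pos S p₁ p₂ r) {u : List (GenSym S.A × Bool)}
    (hu : u <+: List.replicate p (f, true)) (hu' : u <+: r) (hN : p ≤ 20 * u.length) :
    List.replicate p (f, true) = r := by
  have hlen : 0 < u.length := by omega
  have hmem : ∀ z ∈ u, z = (f, true) := fun z hz => List.eq_of_mem_replicate (hu.subset hz)
  have hin : (f, true) ∈ r := by
    have h0 := List.getElem_mem hlen
    have := hmem _ h0
    rw [← this]
    exact hu'.subset h0
  rcases hr with hr | hr | ⟨lo, x, y, c, hct, hr⟩ | ⟨m, as, c, hm, hr⟩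
  · have h1 : (f, true) = (GenSym.f1, true) := List.eq_of_mem_replicate (hr ▸ hin)
    have h2 : f = .f1 := by simpa using h1
    rcases hf with ⟨-, rfl⟩ | ⟨rfl, -⟩
    · rw [hr, h2]
    · simp at h2
  · have h1 : (f, true) = (GenSym.f2, true) := List.eq_of_mem_replicate (hr ▸ hin)
    have h2 : f = .f2 := by simpa using h1
    rcases hf with ⟨rfl, -⟩ | ⟨-, rfl⟩
    · simp at h2
    · rw [hr, h2]
  · exfalso
    have hg := chain_good lo x y (CT_ne hct)
    -- a window of this length meets both letters
    rw [hr] at hu'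
    have hlo := CT_lo hct
    obtain ⟨k, hk1, hk2⟩ := BD.exists_blk hg c
    have b0 := chain_blk_le lo x y k
    have b1 := chain_blk_le lo x y (k + 1)
    have hsq : (lo + 1000) ^ 2 ≤ 25000000 := by
      calc (lo + 1000) ^ 2 ≤ 5000 ^ 2 := Nat.pow_le_pow_left (by omega) 2
        _ = 25000000 := by norm_num
    have q1 := BD.P_succ (D := chainBD lo x y) k
    have e1 := hg.epos (k + 1)
    have l1 : ((chainBD lo x y).R (k + 1)).length = 1 := rfl
    have s0 := BD.s_R_ne hg (k + 1) 0 (by rw [l1]; norm_num)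
    have s1 := BD.s_y hg (k + 1) 1 (by rw [l1]) (by rw [l1]; omega)
    have hp' : 10000000000 < p := by norm_num at hp; exact hp
    obtain ⟨j, hj⟩ := Nat.exists_eq_add_of_le hk2.le
    rw [hj, Nat.add_zero, blk_get hg hu' (by omega)] at s0
    rw [hj, Nat.add_assoc, blk_get hg hu' (by omega)] at s1
    have m1 := hmem _ (List.mem_of_getElem? s1)
    have hjl : j < u.length := by omega
    apply s0
    rw [List.getElem?_eq_getElem hjl, hmem _ (List.getElem_mem hjl), m1]
  · exfalso
    rw [hr] at hin
    rcases mem_wBD hin with h | ⟨a, h⟩ <;> rcases hf with ⟨rfl, -⟩ | ⟨rfl, -⟩ <;> simp at h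

theorem pos_main {S : IndexedStructure} {p₁ p₂ : ℕ} (hbig₁ : 10 ^ 10 < p₁) (hbig₂ : 10 ^ 10 < p₂)
    {r₁ r₂ u : List (GenSym S.A × Bool)} (h1 : Pos S p₁ p₂ r₁) (h2 : Pos S p₁ p₂ r₂)
    (hu1 : u <+: r₁) (hu2 : u <+: r₂) (hN : r₁.length ≤ 20 * u.length) : r₁ = r₂ := by
  rcases h1 with rfl | rfl | ⟨lo, x, y, c, hct, hr1⟩ | ⟨m, as, c, hm, hr1⟩
  · rw [List.length_replicate] at hN
    exact pow_main hbig₁ (Or.inl ⟨rfl, rfl⟩) h2 hu1 hu2 hN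
  · rw [List.length_replicate] at hN
    exact pow_main hbig₂ (Or.inr ⟨rfl, rfl⟩) h2 hu1 hu2 hN
  · rw [hr1] at hu1 hN ⊢
    have hg := chain_good lo x y (CT_ne hct)
    rw [List.length_rotate] at hN
    rcases h2 with rfl | rfl | ⟨lo', x', y', c', hct', hr2⟩ | ⟨m, as, c', hm, hr2⟩
    · exact (blk_not_const hg hu1 hN hu2).elim
    · exact (blk_not_const hg hu1 hN hu2).elim
    · rw [hr2] at hu2 ⊢
      have hg' := chain_good lo' x' y' (CT_ne hct')
      have hy := chain_y_eq hg hg' (fun _ => rfl) hu1 hu2 hN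
      obtain ⟨k, k', i, hi, hi', hR, he, -, -⟩ := blk_decode hg hg' hy hu1 hu2 hN
      have hy' : y = y' := hy
      have hx' : x = x' := by
        have : [(x, true)] = [(x', true)] := hR
        simpa using this
      subst hy' hx'
      have := CT_lo_eq hct hct'
      subst this
      refine BD.final hg hi hi' ?_
      have he' : (lo + k % 1000 + 1) ^ 2 = (lo + k' % 1000 + 1) ^ 2 := he
      have := Nat.pow_left_injective (n := 2) (by norm_num) he'
      show k % 1000 = k' % 1000
      omega
    · exfalso
      subst hr2
      obtain ⟨i, -, hi, -⟩ := blk_yy hg hu1 hN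
      have := hu2.subset (List.mem_of_getElem? hi)
      have hy : (chainBD lo x y).y = y := rfl
      rw [hy] at this
      rcases mem_wBD this with h | ⟨a, h⟩ <;>
        rcases CT_y hct with rfl | rfl | rfl | rfl <;> simp at h
  · subst hr1
    have hg := wBD_good (as := as) hm
    rw [List.length_rotate] at hN
    rcases h2 with rfl | rfl | ⟨lo', x', y', c', hct', hr2⟩ | ⟨m', as', c', hm', hr2⟩
    · exact (blk_not_const hg hu1 hN hu2).elim
    · exact (blk_not_const hg hu1 hN hu2).elim
    · exfalso
      rw [hr2] at hu2
      have hg' := chain_good lo' x' y' (CT_ne hct')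
      have hy := chain_y_eq hg hg' (fun _ => rfl) hu1 hu2 hN
      rw [wBD_y] at hy
      have hy : GenSym.b = y' := hy
      rcases CT_y hct' with h | h | h | h <;> rw [h] at hy <;> simp at hy
    · subst hr2
      have hg' := wBD_good (as := as') hm'
      obtain ⟨k, k', i, hi, hi', hR, he, hR1, he1⟩ :=
        blk_decode hg hg' (by rw [wBD_y, wBD_y]) hu1 hu2 hN
      obtain ⟨hD, hk⟩ := w_unique hm hm' hR he hR1 he1
      rw [← hD] at hi' ⊢
      exact BD.final hg hi hi' hk

theorem pos_letter {S : IndexedStructure} {p₁ p₂ : ℕ} (hbig₁ : 10 ^ 10 < p₁) (hbig₂ : 10 ^ 10 < p₂)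
    {r u : List (GenSym S.A × Bool)} (h1 : Pos S p₁ p₂ r)
    (hu : u <+: r) (hN : r.length ≤ 20 * u.length) :
    ∃ z, (z, true) ∈ u ∧ ∀ a, z ≠ .elt a := by
  have hrep : ∀ (p : ℕ) (f : GenSym S.A), 10 ^ 10 < p → (∀ a, f ≠ .elt a) →
      r = List.replicate p (f, true) → ∃ z, (z, true) ∈ u ∧ ∀ a, z ≠ .elt a := by
    intro p f hp hf hr
    have hlen : 0 < u.length := by
      rw [hr, List.length_replicate] at hN
      omega
    refine ⟨f, ?_, hf⟩
    have h0 := List.getElem_mem hlen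
    have := hu.subset h0
    rw [hr] at this
    rw [← List.eq_of_mem_replicate this]
    exact h0
  rcases h1 with h | h | ⟨lo, x, y, c, hct, hr1⟩ | ⟨m, as, c, hm, hr1⟩
  · exact hrep _ _ hbig₁ (by simp) h
  · exact hrep _ _ hbig₂ (by simp) h
  · rw [hr1] at hu hN
    rw [List.length_rotate] at hN
    obtain ⟨i, -, hi, -⟩ := blk_yy (chain_good lo x y (CT_ne hct)) hu hN
    refine ⟨y, List.mem_of_getElem? hi, ?_⟩
    rcases CT_y hct with rfl | rfl | rfl | rfl <;> simp
  · subst hr1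
    rw [List.length_rotate] at hN
    obtain ⟨i, -, hi, -⟩ := blk_yy (wBD_good hm) hu hN
    rw [wBD_y] at hi
    exact ⟨.b, List.mem_of_getElem? hi, by simp⟩

theorem pos_neg {S : IndexedStructure} {p₁ p₂ : ℕ} {r : List (GenSym S.A × Bool)}
    (h1 : Pos S p₁ p₂ r) {z : GenSym S.A} (hz : (z, false) ∈ r) : ∃ a, z = .elt a := by
  rcases h1 with rfl | rfl | ⟨lo, x, y, c, hct, hr1⟩ | ⟨m, as, c, hm, hr1⟩
  · have := List.eq_of_mem_replicate hz; simp at this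
  · have := List.eq_of_mem_replicate hz; simp at this
  · rw [hr1] at hz
    rw [List.mem_rotate] at hz
    rcases BD.mem_word hz with h | ⟨k, h⟩
    · simp at h
    · simp [chainBD] at h
  · subst hr1
    rcases mem_wBD hz with h | ⟨a, h⟩
    · simp at h
    · exact ⟨a, h⟩

theorem pos_rotate {S : IndexedStructure} {p₁ p₂ : ℕ} {r : List (GenSym S.A × Bool)}
    (h1 : Pos S p₁ p₂ r) (n : ℕ) : Pos S p₁ p₂ (r.rotate n) := by
  rcases h1 with rfl | rfl | ⟨lo, x, y, c, hct, hr1⟩ | ⟨m, as, c, hm, hr1⟩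
  · left; rw [List.rotate_replicate]
  · right; left; rw [List.rotate_replicate]
  · rw [hr1, List.rotate_rotate]; exact Or.inr (Or.inr (Or.inl ⟨lo, x, y, _, hct, rfl⟩))
  · rw [hr1, List.rotate_rotate]; exact Or.inr (Or.inr (Or.inr ⟨m, as, _, hm, rfl⟩))

theorem mem_invRev {α : Type} {l : List (α × Bool)} {z : α} {b : Bool} (h : (z, b) ∈ l) :
    (z, !b) ∈ FreeGroup.invRev l := by
  unfold FreeGroup.invRev
  rw [List.mem_reverse, List.mem_map]
  exact ⟨_, h, rfl⟩

/-- The case of a positive first relator. -/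
theorem half {S : IndexedStructure} {p₁ p₂ : ℕ} (hbig₁ : 10 ^ 10 < p₁) (hbig₂ : 10 ^ 10 < p₂)
    {r₁ r₂ u : List (GenSym S.A × Bool)} (h1 : Pos S p₁ p₂ r₁)
    (h2 : Pos S p₁ p₂ r₂ ∨ Pos S p₁ p₂ (FreeGroup.invRev r₂))
    (hu1 : u <+: r₁) (hu2 : u <+: r₂) (hN : r₁.length ≤ 20 * u.length) : r₁ = r₂ := by
  rcases h2 with h2 | h2
  · exact pos_main hbig₁ hbig₂ h1 h2 hu1 hu2 hN
  · exfalso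
    obtain ⟨z, hz, hza⟩ := pos_letter hbig₁ hbig₂ h1 hu1 hN
    have := mem_invRev (hu2.subset hz)
    obtain ⟨a, ha⟩ := pos_neg h2 this
    exact hza a ha

theorem full {S : IndexedStructure} {p₁ p₂ : ℕ} (hbig₁ : 10 ^ 10 < p₁) (hbig₂ : 10 ^ 10 < p₂)
    {r₁ r₂ u : List (GenSym S.A × Bool)}
    (h1 : Pos S p₁ p₂ r₁ ∨ Pos S p₁ p₂ (FreeGroup.invRev r₁))
    (h2 : Pos S p₁ p₂ r₂ ∨ Pos S p₁ p₂ (FreeGroup.invRev r₂))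
    (hu1 : u <+: r₁) (hu2 : u <+: r₂) (hN : r₁.length ≤ 20 * u.length) : r₁ = r₂ := by
  rcases h1 with h1 | h1
  · exact half hbig₁ hbig₂ h1 h2 hu1 hu2 hN
  · obtain ⟨t₁, rfl⟩ := hu1
    obtain ⟨t₂, rfl⟩ := hu2
    have key : ∀ t : List (GenSym S.A × Bool), (FreeGroup.invRev (u ++ t)).rotate t.length =
        FreeGroup.invRev u ++ FreeGroup.invRev t := by
      intro t
      rw [FreeGroup.invRev_append]
      have : t.length = (FreeGroup.invRev t).length := by rw [FreeGroup.invRev_length]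
      rw [this, List.rotate_append_length_eq]
    have h1' : Pos S p₁ p₂ (FreeGroup.invRev u ++ FreeGroup.invRev t₁) := by
      rw [← key]; exact pos_rotate h1 _
    have h2' : Pos S p₁ p₂ (FreeGroup.invRev u ++ FreeGroup.invRev t₂) ∨
        Pos S p₁ p₂ (FreeGroup.invRev (FreeGroup.invRev u ++ FreeGroup.invRev t₂)) := by
      rcases h2 with h2 | h2
      · right
        rw [FreeGroup.invRev_append, FreeGroup.invRev_invRev, FreeGroup.invRev_invRev]
        have := pos_rotate h2 u.length
        rwa [List.rotate_append_length_eq] at this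
      · left
        rw [← key]; exact pos_rotate h2 _
    have := half hbig₁ hbig₂ h1' h2' (List.prefix_append _ _) (List.prefix_append _ _) (by
      simp only [List.length_append, FreeGroup.invRev_length] at hN ⊢
      exact hN)
    have h3 := List.append_cancel_left this
    rw [FreeGroup.invRev_injective h3]

end SC

/-- the symmetrized closure of the relator set of the presentation of
`G(𝒜)` satisfies the `C'(1/20)` small cancellation condition: for every relator `r` in the
symmetrized set and every piece `u` which is an initial segment of `r`, the word length of
`u` is less than `1/20` times the word length of `r`. -/
theorem stmt_9 (S : IndexedStructure) (p₁ p₂ : ℕ)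
    (hp₁ : p₁.Prime) (hp₂ : p₂.Prime) (hne : p₁ ≠ p₂)
    (hbig₁ : 10 ^ 10 < p₁) (hbig₂ : 10 ^ 10 < p₂) :
    ∀ r ∈ symmClosure (grpRels S p₁ p₂), ∀ u : List (GenSym S.A × Bool),
      IsPiece (symmClosure (grpRels S p₁ p₂)) u → u <+: r →
        20 * u.length < r.length := by
  intro r hr u hp hu
  by_contra hcon
  obtain ⟨r₁, hr₁, r₂, hr₂, hne12, hu₁, hu₂⟩ := hp
  have hN : r.length ≤ 20 * u.length := by omega
  have e1 := SC.full hbig₁ hbig₂ (SC.pos_of_symm hr) (SC.pos_of_symm hr₁) hu hu₁ hN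
  have e2 := SC.full hbig₁ hbig₂ (SC.pos_of_symm hr) (SC.pos_of_symm hr₂) hu hu₂ hN
  exact hne12 (e1.symm.trans e2)
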